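/- arXiv:0907.2577 — 2 statements merged into one kernel-verified Lean document; each statement's English description precedes it below -/
import Mathlib

section
/- For any prime p and any non-negative integers a, m, s, K with 0 ≤ a < p, the p-adic valuation of 𝐒(a,K,s,p,m) := Σ_{j=mp^s}^{(m+1)p^s−1} (𝐁_𝐍(a+jp)·𝐁_𝐍(K−j) − 𝐁_𝐍(j)·𝐁_𝐍(a+(K−j)p)) is at least (s+1) + v_p(𝐁_𝐍(m)), i.e., 𝐒(a,K,s,p,m) ∈ p^{s+1}·𝐁_𝐍(m)·ℤ_p. -/
open Finset

/-- The `n`-th harmonic number `H_n = 1 + 1/2 + ⋯ + 1/n`, as a rational (`H_0 = 0`). -/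
def harm (n : ℕ) : ℚ := ∑ i ∈ Finset.range n, (1 : ℚ) / (i + 1)

/-- Subsets of the set of distinct prime factors of `N` having even cardinality. -/
def evenSub (N : ℕ) : Finset (Finset ℕ) :=
  N.primeFactors.powerset.filter fun J => Even J.card

/-- Subsets of the set of distinct prime factors of `N` having odd cardinality. -/
def oddSub (N : ℕ) : Finset (Finset ℕ) :=
  N.primeFactors.powerset.filter fun J => Odd J.card

/-- `∏_{j=1}^μ (α_j m)!`, where the `α_j` are the quotients of `N` by products of evenly
many distinct prime factors of `N`. -/
def Bnum (N m : ℕ) : ℕ :=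
  ∏ J ∈ evenSub N, Nat.factorial ((N / ∏ p ∈ J, p) * m)

/-- `∏_{j=1}^η (β_j m)!`, where the `β_j` are the quotients of `N` by products of oddly
many distinct prime factors of `N`, padded with `φ(N)` entries equal to `1` (so that
`Σ α_j = Σ β_j`). -/
def Bden (N m : ℕ) : ℕ :=
  (∏ J ∈ oddSub N, Nat.factorial ((N / ∏ p ∈ J, p) * m)) * (Nat.factorial m) ^ N.totient

/-- `𝐁_N(m) = (∏ (α_j m)!)/(∏ (β_j m)!)`. -/
noncomputable def BB (N m : ℕ) : ℚ := (Bnum N m : ℚ) / (Bden N m : ℚ)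

/-- `𝐁_𝐍(m) = ∏_{j=1}^k 𝐁_{N_j}(m)` for a vector `𝐍 = (N_1, …, N_k)`. -/
noncomputable def BBvec {k : ℕ} (N : Fin k → ℕ) (m : ℕ) : ℚ := ∏ i, BB (N i) m

/-- `𝐁_𝐍` extended to the integers by the convention `𝐁_𝐍(n) = 0` for `n < 0`. -/
noncomputable def BBvecZ {k : ℕ} (N : Fin k → ℕ) (n : ℤ) : ℚ :=
  if 0 ≤ n then BBvec N n.toNat else 0

/-- A `p`-integral function on `ℕ` whose values at points congruent modulo `p ^ s` agree modulo
`p ^ (s + 1)`, for every `s`. -/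
def IsDworkFactor (p : ℕ) [Fact p.Prime] (f : ℕ → ℚ_[p]) : Prop :=
  (∀ x, ‖f x‖ ≤ 1) ∧ ∀ s n x, ‖f (x + n * p ^ s) - f x‖ ≤ ‖(p : ℚ_[p])‖ ^ (s + 1)

/-- The extension of a sequence by zero to the negative integers. -/
noncomputable def extendZero {R : Type*} [Zero R] (A : ℕ → R) (n : ℤ) : R :=
  if 0 ≤ n then A n.toNat else 0

theorem extendZero_natCast {R : Type*} [Zero R] (A : ℕ → R) (n : ℕ) :
    extendZero A (n : ℤ) = A n := by
  simp [extendZero]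

theorem extendZero_of_neg {R : Type*} [Zero R] (A : ℕ → R) {n : ℤ} (hn : n < 0) :
    extendZero A n = 0 := by
  simp [extendZero, hn]

theorem sum_range_mul_eq {R : Type*} [AddCommMonoid R] (f : ℕ → R) (q n : ℕ) :
    ∑ j ∈ range (q * n), f j = ∑ u ∈ range n, ∑ i ∈ range q, f (i + q * u) := by
  induction n with
  | zero => simp
  | succ n ih =>
    rw [mul_add, mul_one, sum_range_add, sum_range_succ, ih]
    simp [add_comm]

namespace Dwork

variable {p : ℕ} [hp : Fact p.Prime]

/-- The summand of the Dwork sum. -/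
noncomputable def summand (A : ℕ → ℚ_[p]) (a : ℕ) (K : ℤ) (j : ℕ) : ℚ_[p] :=
  A (a + j * p) * extendZero A (K - j) - A j * extendZero A (a + (K - j) * p)

/-- The Dwork sum over the `m`-th block of length `p ^ s`. -/
noncomputable def blockSum (A : ℕ → ℚ_[p]) (a s m : ℕ) (K : ℤ) : ℚ_[p] :=
  ∑ j ∈ range (p ^ s), summand A a K (j + p ^ s * m)

theorem blockSum_succ (A : ℕ → ℚ_[p]) (a s m : ℕ) (K : ℤ) :
    blockSum A a (s + 1) m K = ∑ i ∈ range p, blockSum A a s (i + p * m) K := by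
  unfold blockSum
  rw [pow_succ, sum_range_mul_eq]
  refine sum_congr rfl fun u _ => sum_congr rfl fun i _ => ?_
  congr 1
  ring

theorem summand_eq_zero (A : ℕ → ℚ_[p]) {a : ℕ} (ha : a < p) {K : ℤ} {j : ℕ} (h : K < j) :
    summand A a K j = 0 := by
  unfold summand
  rw [extendZero_of_neg A (n := K - j) (by omega), extendZero_of_neg A]
  · simp
  · have : (K - j) * p ≤ (-1) * p := mul_le_mul_of_nonneg_right (by omega) (by positivity)
    omega

theorem sum_summand_eq_zero (A : ℕ → ℚ_[p]) (a K : ℕ) :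
    ∑ j ∈ range (K + 1), summand A a K j = 0 := by
  unfold summand
  rw [sum_sub_distrib, sub_eq_zero, ← sum_range_reflect]
  refine sum_congr rfl fun j hj => ?_
  have hj : j ≤ K := by simpa [Nat.lt_succ_iff] using hj
  obtain ⟨i, rfl⟩ := Nat.exists_eq_add_of_le hj
  have e1 : j + i + 1 - 1 - j = i := by omega
  have e2 : ((j + i : ℕ) : ℤ) - (i : ℕ) = (j : ℕ) := by push_cast; ring
  have e3 : (a : ℤ) + (((j + i : ℕ) : ℤ) - j) * p = ((a + i * p : ℕ) : ℤ) := by push_cast; ring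
  rw [e1, e2, e3, extendZero_natCast, extendZero_natCast, mul_comm]

theorem sum_blockSum_eq_zero (A : ℕ → ℚ_[p]) {a : ℕ} (ha : a < p) (s K : ℕ) :
    ∑ m ∈ range (K + 1), blockSum A a s m K = 0 := by
  unfold blockSum
  rw [← sum_range_mul_eq, ← sum_summand_eq_zero A a K]
  symm
  refine sum_subset ?_ fun j _ hj => summand_eq_zero A ha ?_
  · intro j
    simp only [mem_range]
    intro h
    exact h.trans_le (Nat.le_mul_of_pos_left _ (pow_pos hp.out.pos _))
  · simp only [mem_range] at hj
    omega

theorem blockSum_of_neg (A : ℕ → ℚ_[p]) {a : ℕ} (ha : a < p) (s m : ℕ) {K : ℤ} (hK : K < 0) :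
    blockSum A a s m K = 0 :=
  sum_eq_zero fun _ _ => summand_eq_zero A ha (by omega)

section

variable {A : ℕ → ℚ_[p]} {E : ℕ → ℕ → ℚ_[p]}

theorem norm_le_of_digits (hE : ∀ v < p, IsDworkFactor p (E v))
    (hA : ∀ v < p, ∀ x, A (v + p * x) = A x * E v x) (s : ℕ) :
    ∀ u < p ^ s, ∀ n, ‖A (u + p ^ s * n)‖ ≤ ‖A n‖ := by
  induction s with
  | zero => intro u hu n; simp at hu; simp [hu]
  | succ s ih =>
    intro u hu n
    have e : u + p ^ (s + 1) * n = u % p + p * (u / p + p ^ s * n) := by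
      conv_lhs => rw [← Nat.mod_add_div u p]
      ring
    have hv := Nat.mod_lt u hp.out.pos
    rw [e, hA _ hv, norm_mul]
    have h1 := (hE _ hv).1 (u / p + p ^ s * n)
    have h2 := ih (u / p) (Nat.div_lt_of_lt_mul (by rwa [pow_succ'] at hu)) n
    calc _ ≤ ‖A (u / p + p ^ s * n)‖ * 1 := by gcongr
      _ ≤ _ := by simpa using h2

theorem norm_le_one (h0 : A 0 = 1) (hE : ∀ v < p, IsDworkFactor p (E v))
    (hA : ∀ v < p, ∀ x, A (v + p * x) = A x * E v x) (n : ℕ) : ‖A n‖ ≤ 1 := by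
  have := norm_le_of_digits hE hA n n (Nat.lt_pow_self hp.out.one_lt) 0
  simpa [h0] using this

theorem norm_sub_le (hE : ∀ v < p, IsDworkFactor p (E v))
    (hA : ∀ v < p, ∀ x, A (v + p * x) = A x * E v x) (hne : ∀ n, A n ≠ 0)
    {v s u : ℕ} (hv : v < p) (hu : u < p ^ s) (n : ℕ) :
    ‖A (v + p * u + p ^ (s + 1) * n) / A (v + p * u) - A (u + p ^ s * n) / A u‖ * ‖A (v + p * u)‖ ≤
      ‖(p : ℚ_[p])‖ ^ (s + 1) * ‖A n‖ := by
  rw [← norm_mul]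
  have e : v + p * u + p ^ (s + 1) * n = v + p * (u + n * p ^ s) := by ring
  have e' : (A (v + p * u + p ^ (s + 1) * n) / A (v + p * u) - A (u + p ^ s * n) / A u)
      * A (v + p * u) = A (u + p ^ s * n) * (E v (u + n * p ^ s) - E v u) := by
    rw [sub_mul, div_mul_cancel₀ _ (hne _), e, hA v hv, hA v hv, mul_comm n]
    field_simp [hne u]
  rw [e', norm_mul, mul_comm]
  gcongr
  · exact (hE v hv).2 s n u
  · exact norm_le_of_digits hE hA s u hu n

theorem norm_blockSum_sub_le (h0 : A 0 = 1) (hE : ∀ v < p, IsDworkFactor p (E v))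
    (hA : ∀ v < p, ∀ x, A (v + p * x) = A x * E v x) (hne : ∀ n, A n ≠ 0)
    {a : ℕ} (ha : a < p) (m : ℕ) (K : ℤ) (t : ℕ) : ∀ r,
    (∀ u < t + r, ∀ m K, ‖blockSum A a u m K‖ ≤ ‖(p : ℚ_[p])‖ ^ (u + 1) * ‖A m‖) →
    ‖blockSum A a (t + r) m (K + p ^ (t + r) * m) -
      ∑ j ∈ range (p ^ r), A (j + p ^ r * m) / A j * blockSum A a t j K‖ ≤
      ‖(p : ℚ_[p])‖ ^ (t + r + 1) * ‖A m‖ := by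
  induction t with
  | zero =>
    intro r _
    unfold blockSum
    rw [zero_add, ← sum_sub_distrib]
    refine IsUltrametricDist.norm_sum_le_of_forall_le_of_nonneg (by positivity) fun j hj => ?_
    have hj : j < p ^ r := mem_range.1 hj
    have key := norm_sub_le hE hA hne ha hj m
    have e : summand A a (K + p ^ r * m) (j + p ^ r * m) -
        A (j + p ^ r * m) / A j * ∑ i ∈ range (p ^ 0), summand A a K (i + p ^ 0 * j) =
        (A (a + p * j + p ^ (r + 1) * m) / A (a + p * j) - A (j + p ^ r * m) / A j)
          * A (a + p * j) * extendZero A (K - j) := by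
      have e1 : K + (p : ℤ) ^ r * m - ((j + p ^ r * m : ℕ) : ℤ) = K - j := by push_cast; ring
      have e2 : a + (j + p ^ r * m) * p = a + p * j + p ^ (r + 1) * m := by ring
      have e3 := hne j
      have e4 := hne (a + p * j)
      simp only [pow_zero, range_one, sum_singleton, zero_add, one_mul, summand, e1, e2, mul_comm j p]
      field_simp
      ring
    rw [e, norm_mul, norm_mul]
    have hz : ‖extendZero A (K - j)‖ ≤ 1 := by
      unfold extendZero
      split_ifs
      · exact norm_le_one h0 hE hA _
      · simp
    calc _ ≤ ‖(p : ℚ_[p])‖ ^ (r + 1) * ‖A m‖ * 1 := by gcongr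
      _ = _ := mul_one _
  | succ t ih =>
    intro r hα
    have ih := ih (r + 1) (by rwa [← add_assoc, add_right_comm])
    rw [← add_assoc, add_right_comm] at ih
    have e : blockSum A a (t + 1 + r) m (K + p ^ (t + 1 + r) * m) -
        ∑ j ∈ range (p ^ r), A (j + p ^ r * m) / A j * blockSum A a (t + 1) j K =
        (blockSum A a (t + 1 + r) m (K + p ^ (t + 1 + r) * m) -
        ∑ j ∈ range (p ^ (r + 1)), A (j + p ^ (r + 1) * m) / A j * blockSum A a t j K) +
        ∑ u ∈ range (p ^ r), ∑ i ∈ range p,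
          (A (i + p * u + p ^ (r + 1) * m) / A (i + p * u) - A (u + p ^ r * m) / A u)
            * blockSum A a t (i + p * u) K := by
      simp only [sub_mul, sum_sub_distrib, blockSum_succ, mul_sum]
      rw [pow_succ' p r, sum_range_mul_eq, ← pow_succ' p r]
      ring
    rw [e]
    refine (IsUltrametricDist.norm_add_le_max _ _).trans (max_le ih ?_)
    refine IsUltrametricDist.norm_sum_le_of_forall_le_of_nonneg (by positivity) fun u hu => ?_
    refine IsUltrametricDist.norm_sum_le_of_forall_le_of_nonneg (by positivity) fun i hi => ?_
    have key := norm_sub_le hE hA hne (mem_range.1 hi) (mem_range.1 hu) m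
    have h2 := hα t (by omega) (i + p * u) K
    rw [norm_mul]
    calc _ ≤ ‖A (i + p * u + p ^ (r + 1) * m) / A (i + p * u) - A (u + p ^ r * m) / A u‖ *
          (‖(p : ℚ_[p])‖ ^ (t + 1) * ‖A (i + p * u)‖) := by gcongr
      _ = (‖A (i + p * u + p ^ (r + 1) * m) / A (i + p * u) - A (u + p ^ r * m) / A u‖ *
          ‖A (i + p * u)‖) * ‖(p : ℚ_[p])‖ ^ (t + 1) := by ring
      _ ≤ (‖(p : ℚ_[p])‖ ^ (r + 1) * ‖A m‖) * ‖(p : ℚ_[p])‖ ^ (t + 1) := by gcongr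
      _ = _ := by ring

/-- Dwork's formal congruences. -/
theorem norm_blockSum_le (h0 : A 0 = 1) (hE : ∀ v < p, IsDworkFactor p (E v))
    (hA : ∀ v < p, ∀ x, A (v + p * x) = A x * E v x) (hne : ∀ n, A n ≠ 0)
    {a : ℕ} (ha : a < p) (s : ℕ) :
    ∀ m K, ‖blockSum A a s m K‖ ≤ ‖(p : ℚ_[p])‖ ^ (s + 1) * ‖A m‖ := by
  induction s using Nat.strong_induction_on with
  | _ s ih =>
  have reduce (m : ℕ) (K : ℤ) (h : ‖blockSum A a s 0 (K - p ^ s * m)‖ ≤ ‖(p : ℚ_[p])‖ ^ (s + 1)) :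
      ‖blockSum A a s m K‖ ≤ ‖(p : ℚ_[p])‖ ^ (s + 1) * ‖A m‖ := by
    have hβ := norm_blockSum_sub_le h0 hE hA hne ha m (K - p ^ s * m) s 0 ih
    simp only [add_zero, pow_zero, range_one, sum_singleton, zero_add, one_mul, h0, div_one,
      sub_add_cancel] at hβ
    rw [← sub_add_cancel (blockSum A a s m K) (A m * blockSum A a s 0 (K - p ^ s * m))]
    refine (IsUltrametricDist.norm_add_le_max _ _).trans (max_le hβ ?_)
    rw [norm_mul, mul_comm]
    gcongr
  have base (n : ℕ) : ‖blockSum A a s 0 n‖ ≤ ‖(p : ℚ_[p])‖ ^ (s + 1) := by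
    induction n using Nat.strong_induction_on with
    | _ n ihn =>
    have hsum := sum_blockSum_eq_zero A ha s n
    rw [sum_range_succ', add_eq_zero_iff_eq_neg'] at hsum
    rw [hsum, norm_neg]
    refine IsUltrametricDist.norm_sum_le_of_forall_le_of_nonneg (by positivity) fun i _ => ?_
    refine (reduce (i + 1) n ?_).trans (mul_le_of_le_one_right (by positivity)
      (norm_le_one h0 hE hA _))
    have hpos : 0 < p ^ s * (i + 1) := by have := hp.out.pos; positivity
    rcases le_or_gt (p ^ s * (i + 1)) n with h | h
    · have := ihn (n - p ^ s * (i + 1)) (by omega)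
      rw [Nat.cast_sub h] at this
      exact_mod_cast this
    · rw [blockSum_of_neg A ha]
      · simp
      · rw [sub_neg]; exact_mod_cast h
  intro m K
  refine reduce m K ?_
  rcases lt_or_ge (K - p ^ s * m : ℤ) 0 with h | h
  · rw [blockSum_of_neg A ha _ _ h]
    simp
  · rw [← Int.toNat_of_nonneg h]
    exact base _

end

end Dwork

namespace IsDworkFactor

variable {p : ℕ} [hp : Fact p.Prime] {f g : ℕ → ℚ_[p]}

theorem const {c : ℚ_[p]} (hc : ‖c‖ ≤ 1) : IsDworkFactor p fun _ => c :=
  ⟨fun _ => hc, fun s _ _ => by rw [sub_self, norm_zero]; positivity⟩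

theorem mul (hf : IsDworkFactor p f) (hg : IsDworkFactor p g) :
    IsDworkFactor p fun x => f x * g x := by
  refine ⟨fun x => ?_, fun s n x => ?_⟩
  · rw [norm_mul]
    exact mul_le_one₀ (hf.1 x) (norm_nonneg _) (hg.1 x)
  · have e : f (x + n * p ^ s) * g (x + n * p ^ s) - f x * g x =
        f (x + n * p ^ s) * (g (x + n * p ^ s) - g x) + (f (x + n * p ^ s) - f x) * g x := by ring
    rw [e]
    refine (IsUltrametricDist.norm_add_le_max _ _).trans (max_le ?_ ?_) <;> rw [norm_mul]
    · exact (mul_le_of_le_one_left (norm_nonneg _) (hf.1 _)).trans (hg.2 s n x)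
    · exact (mul_le_of_le_one_right (norm_nonneg _) (hg.1 _)).trans (hf.2 s n x)

theorem prod {ι : Type*} (S : Finset ι) {F : ι → ℕ → ℚ_[p]}
    (hF : ∀ i ∈ S, IsDworkFactor p (F i)) : IsDworkFactor p fun x => ∏ i ∈ S, F i x := by
  classical
  induction S using Finset.induction_on with
  | empty => simpa using const (p := p) (c := 1) (by simp)
  | insert i S hi ih =>
    simp only [prod_insert hi]
    exact (hF i (mem_insert_self _ _)).mul (ih fun j hj => hF j (mem_insert_of_mem hj))

theorem inv (hf : IsDworkFactor p f) (h1 : ∀ x, ‖f x‖ = 1) :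
    IsDworkFactor p fun x => (f x)⁻¹ := by
  refine ⟨fun x => by simp [h1], fun s n x => ?_⟩
  have hne (x : ℕ) : f x ≠ 0 := norm_ne_zero_iff.1 (by simp [h1])
  rw [inv_sub_inv (hne _) (hne _), norm_div, norm_mul, h1, h1, norm_sub_rev]
  simpa using hf.2 s n x

theorem zpow_neg_one_pow (hf : IsDworkFactor p f) (h1 : ∀ x, ‖f x‖ = 1) (n : ℕ) :
    IsDworkFactor p fun x => f x ^ ((-1 : ℤ) ^ n) := by
  rcases n.even_or_odd with h | h
  · simpa [h.neg_one_pow] using hf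
  · simpa [h.neg_one_pow] using hf.inv h1

theorem affine_of_dvd {N : ℕ} (hN : p ∣ N) (k : ℕ) :
    IsDworkFactor p fun x => ((N * x + k : ℕ) : ℚ_[p]) := by
  refine ⟨fun x => by exact_mod_cast Padic.norm_int_le_one (p := p) (_ : ℕ), fun s n x => ?_⟩
  obtain ⟨M, rfl⟩ := hN
  have e : ((p * M * (x + n * p ^ s) + k : ℕ) : ℚ_[p]) - ((p * M * x + k : ℕ) : ℚ_[p]) =
      (p : ℚ_[p]) ^ (s + 1) * ((M * n : ℕ) : ℚ_[p]) := by push_cast; ring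
  rw [e, norm_mul, norm_pow]
  exact mul_le_of_le_one_right (by positivity) (by exact_mod_cast Padic.norm_int_le_one (p := p) (_ : ℕ))

end IsDworkFactor

/-- The product of the integers in `[1, n]` that are not divisible by `p`. -/
def primeToFactorial (p n : ℕ) : ℕ := ∏ k ∈ range n, if p ∣ k + 1 then 1 else k + 1

theorem primeToFactorial_succ (p n : ℕ) :
    primeToFactorial p (n + 1) = primeToFactorial p n * if p ∣ n + 1 then 1 else n + 1 :=
  prod_range_succ _ _

theorem primeToFactorial_coprime {p : ℕ} (hp : p.Prime) (n : ℕ) :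
    p.Coprime (primeToFactorial p n) := by
  refine Nat.Coprime.prod_right fun k _ => ?_
  split_ifs with h
  · simp
  · exact (Nat.Prime.coprime_iff_not_dvd hp).2 h

theorem factorial_eq_primeToFactorial_mul {p : ℕ} (hp : 0 < p) (n : ℕ) :
    n.factorial = primeToFactorial p n * p ^ (n / p) * (n / p).factorial := by
  induction n with
  | zero => simp [primeToFactorial]
  | succ n ih =>
    rw [Nat.factorial_succ, primeToFactorial_succ, ih, Nat.succ_div]
    split_ifs with h
    · obtain ⟨q, hq⟩ := h
      have : q = n / p + 1 := by
        have h1 : (n + 1) / p = q := by rw [hq, Nat.mul_div_cancel_left _ hp]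
        rw [← h1, Nat.succ_div_of_dvd ⟨q, hq⟩]
      rw [hq, this, Nat.factorial_succ]
      ring
    · simp only [add_zero]
      ring

theorem primeToFactorial_add_modEq {p : ℕ} (s n c : ℕ) :
    primeToFactorial p (n + c * p ^ (s + 1)) ≡
      primeToFactorial p n * primeToFactorial p (p ^ (s + 1)) ^ c [MOD p ^ (s + 1)] := by
  have one (n : ℕ) : primeToFactorial p (n + p ^ (s + 1)) ≡
      primeToFactorial p n * primeToFactorial p (p ^ (s + 1)) [MOD p ^ (s + 1)] := by
    induction n with
    | zero => simp [primeToFactorial, Nat.ModEq.refl]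
    | succ n ih =>
      rw [add_right_comm, primeToFactorial_succ, primeToFactorial_succ, mul_right_comm]
      refine ih.mul ?_
      have hd : p ∣ n + p ^ (s + 1) + 1 ↔ p ∣ n + 1 := by
        rw [add_right_comm]
        exact Nat.dvd_add_left (dvd_pow_self p s.succ_ne_zero)
      rw [add_right_comm] at hd ⊢
      simp only [hd]
      split_ifs
      · rfl
      · simp [Nat.ModEq]
  induction c with
  | zero => simp [Nat.ModEq.refl]
  | succ c ih =>
    rw [add_mul, one_mul, ← add_assoc, pow_succ _ c, ← mul_assoc]
    exact (one _).trans (ih.mul_right _)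

theorem prod_powerset_zpow_prod_Icc {F : Type*} [Field F] (P : Finset ℕ) (hP : ∀ q ∈ P, q.Prime)
    (f : ℕ → F) (hf : ∀ k, 0 < k → f k ≠ 0) (L : ℕ) :
    ∏ J ∈ P.powerset, (∏ i ∈ Icc 1 (L / ∏ q ∈ J, q), f (i * ∏ q ∈ J, q)) ^ ((-1 : ℤ) ^ #J) =
      ∏ k ∈ Icc 1 L with ∀ q ∈ P, ¬ q ∣ k, f k := by
  induction P using Finset.induction_on generalizing f L with
  | empty => simp
  | insert r P hr ih =>
    have hrp : r.Prime := hP r (mem_insert_self _ _)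
    have hP' : ∀ q ∈ P, q.Prime := fun q hq => hP q (mem_insert_of_mem hq)
    have h2 : ∏ J ∈ P.powerset, (∏ i ∈ Icc 1 (L / ∏ q ∈ insert r J, q),
        f (i * ∏ q ∈ insert r J, q)) ^ ((-1 : ℤ) ^ #(insert r J)) =
        (∏ k ∈ Icc 1 (L / r) with ∀ q ∈ P, ¬ q ∣ k, f (r * k))⁻¹ := by
      rw [← ih hP' (fun k => f (r * k)) (fun k hk => hf _ (Nat.mul_pos hrp.pos hk)), ← prod_inv_distrib]
      refine prod_congr rfl fun J hJ => ?_
      have hrJ : r ∉ J := fun h => hr (mem_powerset.1 hJ h)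
      rw [prod_insert hrJ, card_insert_of_notMem hrJ, pow_succ, mul_neg_one, zpow_neg,
        Nat.div_div_eq_div_mul]
      simp only [mul_left_comm]
    have h3 : ∏ k ∈ Icc 1 (L / r) with ∀ q ∈ P, ¬ q ∣ k, f (r * k) =
        ∏ k ∈ (Icc 1 L).filter (fun k => ∀ q ∈ P, ¬ q ∣ k) with r ∣ k, f k := by
      have hd (k : ℕ) : (∀ q ∈ P, ¬ q ∣ r * k) ↔ ∀ q ∈ P, ¬ q ∣ k := by
        refine forall₂_congr fun q hq => not_congr ?_
        have hne : q ≠ r := fun h => hr (h ▸ hq)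
        exact ((Nat.coprime_primes (hP' q hq) hrp).2 hne).dvd_mul_left
      refine prod_nbij' (r * ·) (· / r) ?_ ?_ ?_ ?_ ?_
      · intro k hk
        simp only [mem_filter, mem_Icc, hd] at hk ⊢
        refine ⟨⟨⟨Nat.mul_pos hrp.pos hk.1.1, ?_⟩, hk.2⟩, dvd_mul_right _ _⟩
        exact (Nat.mul_le_mul_left r hk.1.2).trans (Nat.mul_div_le L r)
      · intro k hk
        simp only [mem_filter, mem_Icc] at hk
        obtain ⟨⟨⟨h1, hL⟩, hq⟩, j, rfl⟩ := hk
        rw [hd] at hq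
        simp only [mem_filter, mem_Icc, Nat.mul_div_cancel_left _ hrp.pos]
        exact ⟨⟨Nat.pos_of_mul_pos_left h1, (Nat.le_div_iff_mul_le hrp.pos).2 (by rwa [mul_comm])⟩, hq⟩
      · intro k _
        simp [Nat.mul_div_cancel_left _ hrp.pos]
      · intro k hk
        exact Nat.mul_div_cancel' (mem_filter.1 hk).2
      · intro k _
        rfl
    have hne : ∏ k ∈ (Icc 1 L).filter (fun k => ∀ q ∈ P, ¬ q ∣ k) with r ∣ k, f k ≠ 0 :=
      prod_ne_zero_iff.2 fun k hk => hf k (by simp only [mem_filter, mem_Icc] at hk; omega)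
    rw [prod_powerset_insert hr, ih hP' f hf, h2, h3,
      ← prod_filter_mul_prod_filter_not ((Icc 1 L).filter fun k => ∀ q ∈ P, ¬ q ∣ k) (r ∣ ·),
      mul_comm, inv_mul_cancel_left₀ hne, filter_filter]
    refine prod_congr (filter_congr fun k _ => ?_) fun _ _ => rfl
    simp only [forall_mem_insert, and_comm]

/-- `(c m)! / (m!)^c`. -/
noncomputable def diagMultinomial (c m : ℕ) : ℚ := ((c * m).factorial : ℚ) / (m.factorial : ℚ) ^ c

theorem diagMultinomial_zero (c : ℕ) : diagMultinomial c 0 = 1 := by simp [diagMultinomial]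

theorem diagMultinomial_ne_zero (c m : ℕ) : diagMultinomial c m ≠ 0 := by
  have := m.factorial_ne_zero
  have := (c * m).factorial_ne_zero
  unfold diagMultinomial
  positivity

section

variable (p : ℕ) [hp : Fact p.Prime]

/-- The unit part of the quotient of `diagMultinomial c` at `v + p * x` by its value at `x`. -/
noncomputable def diagMultinomialUnit (v c x : ℕ) : ℚ_[p] :=
  (primeToFactorial p (c * (v + p * x)) : ℚ_[p]) / (primeToFactorial p (v + p * x) : ℚ_[p]) ^ c

theorem norm_primeToFactorial (n : ℕ) : ‖(primeToFactorial p n : ℚ_[p])‖ = 1 :=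
  Padic.norm_natCast_eq_one_iff.2 (primeToFactorial_coprime hp.out n)

theorem norm_diagMultinomialUnit (v c x : ℕ) : ‖diagMultinomialUnit p v c x‖ = 1 := by
  simp [diagMultinomialUnit, -Padic.norm_natCast_eq_one_iff, norm_primeToFactorial]

theorem isDworkFactor_diagMultinomialUnit (v c : ℕ) : IsDworkFactor p (diagMultinomialUnit p v c) := by
  refine ⟨fun x => (norm_diagMultinomialUnit p v c x).le, fun s n x => ?_⟩
  set y := v + p * x
  have ey : v + p * (x + n * p ^ s) = y + n * p ^ (s + 1) := by ring
  have ecy : c * (y + n * p ^ (s + 1)) = c * y + n * c * p ^ (s + 1) := by ring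
  have key : primeToFactorial p (c * (y + n * p ^ (s + 1))) * primeToFactorial p y ^ c ≡
      primeToFactorial p (c * y) * primeToFactorial p (y + n * p ^ (s + 1)) ^ c
        [MOD p ^ (s + 1)] := by
    rw [ecy]
    refine ((primeToFactorial_add_modEq s (c * y) (n * c)).mul_right _).trans
      (Nat.ModEq.trans ?_ (((primeToFactorial_add_modEq s y n).pow c).mul_left _).symm)
    rw [mul_pow, ← pow_mul, mul_assoc, mul_comm (_ ^ (n * c))]
  have hne (n : ℕ) : (primeToFactorial p n : ℚ_[p]) ≠ 0 :=
    norm_ne_zero_iff.1 (by rw [norm_primeToFactorial]; simp)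
  unfold diagMultinomialUnit
  rw [ey, div_sub_div _ _ (pow_ne_zero _ (hne _)) (pow_ne_zero _ (hne _)), norm_div, norm_mul,
    norm_pow, norm_pow, norm_primeToFactorial, norm_primeToFactorial, one_pow, mul_one, div_one,
    mul_comm (_ ^ c)]
  have := (Padic.norm_int_le_pow_iff_dvd (p := p)
    ((primeToFactorial p (c * (y + n * p ^ (s + 1))) * primeToFactorial p y ^ c : ℕ) -
     (primeToFactorial p (c * y) * primeToFactorial p (y + n * p ^ (s + 1)) ^ c : ℕ)) (s + 1)).2
    (by exact_mod_cast (Nat.modEq_iff_dvd.1 key.symm))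
  rw [zpow_neg, zpow_natCast, ← inv_pow, ← Padic.norm_p] at this
  exact_mod_cast this

theorem diagMultinomial_add_mul {v : ℕ} (hv : v < p) (c x : ℕ) :
    (diagMultinomial c (v + p * x) : ℚ_[p]) = diagMultinomial c x *
      (diagMultinomialUnit p v c x * ∏ i ∈ Icc 1 (c * v / p), ((p * (c * x + i) : ℕ) : ℚ_[p])) := by
  have h1 : c * (v + p * x) / p = c * x + c * v / p := by
    rw [mul_add, mul_left_comm, Nat.add_mul_div_left _ _ hp.out.pos, add_comm]
  have h2 : (v + p * x) / p = x := by
    rw [Nat.add_mul_div_left _ _ hp.out.pos, Nat.div_eq_of_lt hv, zero_add]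
  have h3 (n : ℕ) : (c * x + n).factorial = (c * x).factorial * ∏ i ∈ Icc 1 n, (c * x + i) := by
    induction n with
    | zero => simp
    | succ n ih =>
      rw [← add_assoc, Nat.factorial_succ, ih, prod_Icc_succ_top (by omega)]
      ring
  have hF (n : ℕ) : (primeToFactorial p n : ℚ_[p]) ≠ 0 :=
    norm_ne_zero_iff.1 (by rw [norm_primeToFactorial]; simp)
  have hpne : (p : ℚ_[p]) ≠ 0 := Nat.cast_ne_zero.2 hp.out.ne_zero
  have hx : (x.factorial : ℚ_[p]) ≠ 0 := Nat.cast_ne_zero.2 x.factorial_ne_zero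
  have hF' := hF (v + p * x)
  unfold diagMultinomial diagMultinomialUnit
  rw [factorial_eq_primeToFactorial_mul hp.out.pos (c * (v + p * x)),
    factorial_eq_primeToFactorial_mul hp.out.pos (v + p * x), h1, h2, h3]
  simp only [Nat.cast_mul, prod_mul_distrib, prod_const, Nat.card_Icc, add_tsub_cancel_right]
  push_cast
  field_simp
  ring

end

theorem prod_dvd_of_subset_primeFactors {N : ℕ} {J : Finset ℕ} (hJ : J ⊆ N.primeFactors) :
    ∏ q ∈ J, q ∣ N :=
  (prod_dvd_prod_of_subset _ _ _ hJ).trans N.prod_primeFactors_dvd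

theorem totient_eq_sum_powerset (N : ℕ) :
    (N.totient : ℤ) = ∑ J ∈ N.primeFactors.powerset, (-1) ^ #J * ((N / ∏ q ∈ J, q : ℕ) : ℤ) := by
  have h := Nat.totient_eq_mul_prod_factors N
  simp only [sub_eq_add_neg, prod_one_add, mul_sum] at h
  apply Int.cast_injective (α := ℚ)
  rw [Int.cast_natCast, h, Int.cast_sum]
  refine sum_congr rfl fun J hJ => ?_
  rw [Int.cast_mul, Int.cast_natCast,
    Nat.cast_div_charZero (prod_dvd_of_subset_primeFactors (mem_powerset.1 hJ)), prod_neg,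
    prod_inv_distrib, Nat.cast_prod]
  push_cast
  ring

theorem BB_eq_prod_diagMultinomial (N m : ℕ) :
    BB N m = ∏ J ∈ N.primeFactors.powerset,
      diagMultinomial (N / ∏ q ∈ J, q) m ^ ((-1 : ℤ) ^ #J) := by
  have hm : (m.factorial : ℚ) ≠ 0 := Nat.cast_ne_zero.2 m.factorial_ne_zero
  have hsplit : ∏ J ∈ N.primeFactors.powerset,
      (((N / ∏ q ∈ J, q) * m).factorial : ℚ) ^ ((-1 : ℤ) ^ #J) =
      (∏ J ∈ evenSub N, (((N / ∏ q ∈ J, q) * m).factorial : ℚ)) /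
        ∏ J ∈ oddSub N, (((N / ∏ q ∈ J, q) * m).factorial : ℚ) := by
    rw [← prod_filter_mul_prod_filter_not _ (fun J => Even #J), div_eq_mul_inv,
      ← prod_inv_distrib]
    simp only [Nat.not_even_iff_odd]
    congr 1 <;> refine prod_congr rfl fun J hJ => ?_
    · simp [(mem_filter.1 hJ).2.neg_one_pow]
    · simp [(mem_filter.1 hJ).2.neg_one_pow]
  have hden : ∏ J ∈ N.primeFactors.powerset,
      ((m.factorial : ℚ) ^ (N / ∏ q ∈ J, q)) ^ ((-1 : ℤ) ^ #J) = (m.factorial : ℚ) ^ N.totient := by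
    have hexp : ∀ S : Finset (Finset ℕ), ∏ J ∈ S,
        ((m.factorial : ℚ) ^ (N / ∏ q ∈ J, q)) ^ ((-1 : ℤ) ^ #J) =
        (m.factorial : ℚ) ^ ∑ J ∈ S, (-1) ^ #J * ((N / ∏ q ∈ J, q : ℕ) : ℤ) := by
      intro S
      induction S using Finset.induction_on with
      | empty => simp
      | insert J S hJ ih =>
        rw [prod_insert hJ, sum_insert hJ, zpow_add₀ hm, ih, mul_comm ((-1 : ℤ) ^ #J), zpow_mul,
          zpow_natCast]
    rw [hexp, ← totient_eq_sum_powerset, zpow_natCast]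
  simp only [diagMultinomial, div_zpow, prod_div_distrib]
  rw [hsplit, hden]
  simp only [BB, Bnum, Bden]
  push_cast
  rw [div_div]

theorem BB_zero (N : ℕ) : BB N 0 = 1 := by
  simp [BB_eq_prod_diagMultinomial, diagMultinomial_zero]

theorem BB_ne_zero (N m : ℕ) : BB N m ≠ 0 := by
  rw [BB_eq_prod_diagMultinomial]
  exact prod_ne_zero_iff.2 fun _ _ => zpow_ne_zero _ (diagMultinomial_ne_zero _ _)

section

variable (p : ℕ) [hp : Fact p.Prime]

/-- The quotient of `BB N` at `v + p * x` by its value at `x`. -/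
noncomputable def dworkQuotient (N v x : ℕ) : ℚ_[p] :=
  ∏ J ∈ N.primeFactors.powerset, (diagMultinomialUnit p v (N / ∏ q ∈ J, q) x *
    ∏ i ∈ Icc 1 ((N / ∏ q ∈ J, q) * v / p),
      ((p * ((N / ∏ q ∈ J, q) * x + i) : ℕ) : ℚ_[p])) ^ ((-1 : ℤ) ^ #J)

theorem BB_add_mul {v : ℕ} (hv : v < p) (N x : ℕ) :
    (BB N (v + p * x) : ℚ_[p]) = BB N x * dworkQuotient p N v x := by
  simp only [BB_eq_prod_diagMultinomial, dworkQuotient, Rat.cast_prod, Rat.cast_zpow,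
    ← prod_mul_distrib, ← mul_zpow, diagMultinomial_add_mul p hv]

theorem norm_natCast_prime_of_ne {q : ℕ} (hq : q.Prime) (hne : q ≠ p) : ‖(q : ℚ_[p])‖ = 1 :=
  Padic.norm_natCast_eq_one_iff.2 ((Nat.coprime_primes hp.out hq).2 hne.symm)

theorem norm_ite_div_prod {J : Finset ℕ} (hJ : ∀ q ∈ J, q.Prime) :
    ‖(if p ∈ J then (p : ℚ_[p]) else 1) / ((∏ q ∈ J, q : ℕ) : ℚ_[p])‖ = 1 := by
  have hprod (J' : Finset ℕ) (h : J' ⊆ J) (hp' : p ∉ J') :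
      ‖((∏ q ∈ J', q : ℕ) : ℚ_[p])‖ = 1 := by
    rw [Nat.cast_prod, norm_prod]
    exact prod_eq_one fun q hq =>
      norm_natCast_prime_of_ne p (hJ q (h hq)) fun h => hp' (h ▸ hq)
  split_ifs with h
  · have hpne : (p : ℚ_[p]) ≠ 0 := Nat.cast_ne_zero.2 hp.out.ne_zero
    rw [← mul_prod_erase J (fun q => q) h, Nat.cast_mul, ← div_div, div_self hpne, norm_div,
      norm_one, hprod _ (erase_subset _ _) (notMem_erase _ _), div_one]
  · rw [norm_div, norm_one, hprod J subset_rfl h, div_one]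

theorem exists_prod_powerset_eq {N : ℕ} (hN : 0 < N) (v : ℕ) : ∃ C : ℚ_[p], ‖C‖ = 1 ∧ ∀ x,
    ∏ J ∈ N.primeFactors.powerset, (∏ i ∈ Icc 1 ((N / ∏ q ∈ J, q) * v / p),
      ((p * ((N / ∏ q ∈ J, q) * x + i) : ℕ) : ℚ_[p])) ^ ((-1 : ℤ) ^ #J) =
    C * ((∏ k ∈ Icc 1 (N * v / p) with ∀ q ∈ N.primeFactors.erase p, ¬ q ∣ k, (p : ℚ_[p])) *
      ∏ k ∈ Icc 1 (N * v / p) with ∀ q ∈ N.primeFactors, ¬ q ∣ k, ((N * x + k : ℕ) : ℚ_[p])) := by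
  have hpr : ∀ q ∈ N.primeFactors, q.Prime := fun q hq => Nat.prime_of_mem_primeFactors hq
  have hpne : (p : ℚ_[p]) ≠ 0 := Nat.cast_ne_zero.2 hp.out.ne_zero
  refine ⟨∏ J ∈ N.primeFactors.powerset, (∏ _i ∈ Icc 1 (N * v / p / ∏ q ∈ J, q),
    (if p ∈ J then (p : ℚ_[p]) else 1) / ((∏ q ∈ J, q : ℕ) : ℚ_[p])) ^ ((-1 : ℤ) ^ #J), ?_, ?_⟩
  · rw [norm_prod]
    refine prod_eq_one fun J hJ => ?_
    rw [norm_zpow, norm_prod, prod_eq_one, one_zpow]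
    exact fun _ _ => norm_ite_div_prod p fun q hq => hpr q (mem_powerset.1 hJ hq)
  intro x
  have herase : ∏ J ∈ N.primeFactors.powerset, (∏ _i ∈ Icc 1 (N * v / p / ∏ q ∈ J, q),
      (if p ∈ J then 1 else (p : ℚ_[p]))) ^ ((-1 : ℤ) ^ #J) =
      ∏ J ∈ (N.primeFactors.erase p).powerset,
        (∏ _i ∈ Icc 1 (N * v / p / ∏ q ∈ J, q), (p : ℚ_[p])) ^ ((-1 : ℤ) ^ #J) := by
    symm
    rw [← prod_subset (powerset_mono.2 (erase_subset p N.primeFactors))]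
    · refine prod_congr rfl fun J hJ => ?_
      rw [if_neg fun h => notMem_erase p _ (mem_powerset.1 hJ h)]
    · intro J hJ hJ'
      have : p ∈ J := by
        by_contra h
        exact hJ' (mem_powerset.2 (subset_erase.2 ⟨mem_powerset.1 hJ, h⟩))
      simp [this]
  rw [← prod_powerset_zpow_prod_Icc _ (fun q hq => hpr q (mem_of_mem_erase hq))
      (fun _ => (p : ℚ_[p])) (fun _ _ => hpne),
    ← prod_powerset_zpow_prod_Icc _ hpr (fun k => ((N * x + k : ℕ) : ℚ_[p]))
      (fun k hk => Nat.cast_ne_zero.2 (by omega)),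
    ← herase, ← prod_mul_distrib, ← prod_mul_distrib]
  refine prod_congr rfl fun J hJ => ?_
  have hdvd := prod_dvd_of_subset_primeFactors (mem_powerset.1 hJ)
  have hd0 : 0 < ∏ q ∈ J, q := Nat.pos_of_dvd_of_pos hdvd hN
  have hL : (N / ∏ q ∈ J, q) * v / p = N * v / p / ∏ q ∈ J, q := by
    rw [Nat.div_div_eq_div_mul, mul_comm p, ← Nat.div_div_eq_div_mul, Nat.div_mul_right_comm hdvd]
  rw [hL, ← mul_zpow, ← mul_zpow, ← prod_mul_distrib, ← prod_mul_distrib]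
  congr 1
  refine prod_congr rfl fun i _ => ?_
  generalize ∏ q ∈ J, q = d at *
  obtain ⟨c, rfl⟩ := hdvd
  have hd : (d : ℚ_[p]) ≠ 0 := Nat.cast_ne_zero.2 hd0.ne'
  rw [Nat.mul_div_cancel_left _ hd0]
  split_ifs <;> push_cast <;> field_simp

theorem isDworkFactor_dworkQuotient {N : ℕ} (hN : 0 < N) (v : ℕ) :
    IsDworkFactor p (dworkQuotient p N v) := by
  obtain ⟨C, hC, hCx⟩ := exists_prod_powerset_eq p hN v
  unfold dworkQuotient
  simp only [mul_zpow, prod_mul_distrib, hCx]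
  refine IsDworkFactor.mul (.prod _ fun J _ =>
    (isDworkFactor_diagMultinomialUnit p v _).zpow_neg_one_pow (norm_diagMultinomialUnit p v _) _)
    (.mul (.const hC.le) ?_)
  by_cases h : p ∣ N
  · refine .mul (.const ?_) (.prod _ fun k _ => .affine_of_dvd h k)
    rw [norm_prod]
    exact prod_le_one (fun _ _ => norm_nonneg _) fun _ _ => Padic.norm_p_lt_one.le
  · rw [erase_eq_of_notMem fun hm => h (Nat.dvd_of_mem_primeFactors hm)]
    simp only [← prod_mul_distrib]
    refine .prod _ fun k _ => ?_
    have := IsDworkFactor.affine_of_dvd (p := p) (dvd_mul_right p N) (p * k)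
    simpa [mul_add, mul_assoc] using this

end

/-- Lemma 2 (Krattenthaler–Rivoal): for a prime `p` and `0 ≤ a < p`, the sum
`𝐒(a,K,s,p,m) = Σ_{j=mp^s}^{(m+1)p^s−1} (𝐁_𝐍(a+jp)𝐁_𝐍(K−j) − 𝐁_𝐍(j)𝐁_𝐍(a+(K−j)p))`
lies in `p^{s+1}·𝐁_𝐍(m)·ℤ_p`. -/
theorem S_mem_pow_p_BBvec_zp (p : ℕ) [hp : Fact p.Prime] (a m s K : ℕ) (ha : a < p)
    {k : ℕ} (N : Fin k → ℕ) (hN : ∀ i, 0 < N i) :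
    ‖((∑ j ∈ Finset.Ico (m * p ^ s) ((m + 1) * p ^ s),
          (BBvecZ N ((a : ℤ) + (j : ℤ) * p) * BBvecZ N ((K : ℤ) - (j : ℤ))
            - BBvecZ N (j : ℤ) * BBvecZ N ((a : ℤ) + ((K : ℤ) - (j : ℤ)) * p)) : ℚ) : ℚ_[p])‖
      ≤ ‖(((p : ℚ) ^ (s + 1) * BBvec N m : ℚ) : ℚ_[p])‖ := by
  set A : ℕ → ℚ_[p] := fun n => (BBvec N n : ℚ_[p])
  have hZ (n : ℤ) : (BBvecZ N n : ℚ_[p]) = extendZero A n := by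
    simp only [BBvecZ, extendZero, A]
    split_ifs <;> simp
  have h0 : A 0 = 1 := by simp [A, BBvec, BB_zero]
  have hne (n : ℕ) : A n ≠ 0 := by
    simp only [A, BBvec, ne_eq, Rat.cast_eq_zero]
    exact prod_ne_zero_iff.2 fun i _ => BB_ne_zero _ _
  have hE : ∀ v < p, IsDworkFactor p fun x => ∏ i, dworkQuotient p (N i) v x := fun v _ =>
    .prod _ fun i _ => isDworkFactor_dworkQuotient p (hN i) v
  have hA : ∀ v < p, ∀ x, A (v + p * x) = A x * ∏ i, dworkQuotient p (N i) v x := by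
    intro v hv x
    simp only [A, BBvec, Rat.cast_prod, BB_add_mul p hv, prod_mul_distrib]
  have hsum : ((∑ j ∈ Finset.Ico (m * p ^ s) ((m + 1) * p ^ s),
      (BBvecZ N ((a : ℤ) + (j : ℤ) * p) * BBvecZ N ((K : ℤ) - (j : ℤ))
        - BBvecZ N (j : ℤ) * BBvecZ N ((a : ℤ) + ((K : ℤ) - (j : ℤ)) * p)) : ℚ) : ℚ_[p]) =
      Dwork.blockSum A a s m K := by
    rw [sum_Ico_eq_sum_range, add_mul, one_mul, add_tsub_cancel_left, Rat.cast_sum]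
    unfold Dwork.blockSum
    refine sum_congr rfl fun j _ => ?_
    rw [show m * p ^ s + j = j + p ^ s * m by ring]
    generalize j + p ^ s * m = j
    have e : (a : ℤ) + (j : ℤ) * p = ((a + j * p : ℕ) : ℤ) := by push_cast; ring
    rw [Rat.cast_sub, Rat.cast_mul, Rat.cast_mul, hZ, hZ, hZ, hZ, e, extendZero_natCast,
      extendZero_natCast, Dwork.summand]
  rw [hsum]
  refine (Dwork.norm_blockSum_le h0 hE hA hne ha s m K).trans_eq ?_
  rw [Rat.cast_mul, Rat.cast_pow, Rat.cast_natCast, norm_mul, norm_pow]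
end

section
/- For any prime p, any non-negative integers m and s, any positive integers N_1, N_2, …, N_k, and any integer L with 1 ≤ L ≤ max(N_1,…,N_k), the p-adic valuation of B_𝐍(m)·(H_{Lmp^s} − H_{L⌊m/p⌋p^{s+1}}) is at least v_p(M_𝐍) − v_p(Θ_L) − s, i.e., B_𝐍(m)·(H_{Lmp^s} − H_{L⌊m/p⌋p^{s+1}}) ∈ (M_𝐍/(p^s Θ_L))·ℤ_p. -/
open Finset

/-- `B_N(m) = (Nm)!/m!^N`. -/
noncomputable def BQ (N m : ℕ) : ℚ := ((N * m).factorial : ℚ) / ((m.factorial : ℚ)) ^ N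

/-- `B_𝐍(m) = ∏_{j=1}^k B_{N_j}(m)` for a vector `𝐍 = (N_1, …, N_k)`. -/
noncomputable def BQvec {k : ℕ} (N : Fin k → ℕ) (m : ℕ) : ℚ := ∏ i, BQ (N i) m

/-- `Θ_L`, the denominator of the harmonic number `H_L` written as a reduced
fraction (equal to `L!/gcd(L!, L!·H_L)`). -/
def Theta (L : ℕ) : ℕ := (harm L).den

/-- The subring of rational numbers that are `p`-adically integral. -/
noncomputable def ratPadicIntegers (p : ℕ) [Fact p.Prime] : Subring ℚ :=
  (PadicInt.subring p).comap (Rat.castHom ℚ_[p])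

theorem mem_ratPadicIntegers {p : ℕ} [Fact p.Prime] {x : ℚ} :
    x ∈ ratPadicIntegers p ↔ ‖(x : ℚ_[p])‖ ≤ 1 := Iff.rfl

theorem inv_natCast_mem_ratPadicIntegers {p : ℕ} [Fact p.Prime] {n : ℕ} (h : p.Coprime n) :
    (n : ℚ)⁻¹ ∈ ratPadicIntegers p := by
  rw [mem_ratPadicIntegers]
  push_cast
  rw [norm_inv, Padic.norm_natCast_eq_one_iff.2 h, inv_one]

theorem harm_succ (n : ℕ) : harm (n + 1) = harm n + 1 / ((n : ℚ) + 1) :=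
  Finset.sum_range_succ _ _

theorem harm_zero : harm 0 = 0 := Finset.sum_range_zero _

/-- A block of fewer than `p` harmonic terms following a multiple of `p` is `p`-integral. -/
theorem harm_mul_add_sub_harm_mul_mem {p : ℕ} [hp : Fact p.Prime] (a k : ℕ) (hk : k < p) :
    harm (p * a + k) - harm (p * a) ∈ ratPadicIntegers p := by
  induction k with
  | zero => simp [zero_mem]
  | succ k ih =>
    rw [← add_assoc, harm_succ, add_sub_right_comm]
    refine add_mem (ih (by omega)) ?_
    rw [one_div]
    have : p.Coprime (p * a + (k + 1)) := by
      rw [Nat.coprime_mul_left_add_right]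
      exact Nat.coprime_of_lt_prime (by omega) hk hp.out
    exact_mod_cast inv_natCast_mem_ratPadicIntegers this

theorem p_mul_harm_mul_sub_harm_mem {p : ℕ} [hp : Fact p.Prime] (a : ℕ) :
    (p : ℚ) * harm (p * a) - harm a ∈ ratPadicIntegers p := by
  have hp0 : (p : ℚ) ≠ 0 := by exact_mod_cast hp.out.ne_zero
  induction a with
  | zero => simp [harm_zero, zero_mem]
  | succ a ih =>
    have hp1 := hp.out.pos
    have h := harm_mul_add_sub_harm_mul_mem (p := p) a (p - 1) (by omega)
    have e : p * (a + 1) = p * a + (p - 1) + 1 := by rw [mul_add, mul_one]; omega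
    have e' : ((p * a + (p - 1) : ℕ) : ℚ) + 1 = p * (a + 1) := by
      have := congrArg (Nat.cast (R := ℚ)) e
      push_cast at this ⊢
      linarith
    have ha : (a : ℚ) + 1 ≠ 0 := by positivity
    have key : (p : ℚ) * harm (p * (a + 1)) - harm (a + 1) =
        (p * harm (p * a) - harm a) + p * (harm (p * a + (p - 1)) - harm (p * a)) := by
      rw [e, harm_succ, harm_succ, e']
      field_simp
      ring
    rw [key]
    exact add_mem ih (mul_mem (natCast_mem _ p) h)

theorem pow_mul_harm_mul_pow_sub_harm_mem {p : ℕ} [Fact p.Prime] (a s : ℕ) :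
    (p : ℚ) ^ s * harm (a * p ^ s) - harm a ∈ ratPadicIntegers p := by
  induction s with
  | zero => simp [zero_mem]
  | succ s ih =>
    have h := mul_mem (pow_mem (natCast_mem (ratPadicIntegers p) p) s)
      (p_mul_harm_mul_sub_harm_mem (p := p) (a * p ^ s))
    rw [show a * p ^ (s + 1) = p * (a * p ^ s) by ring]
    convert add_mem ih h using 1
    ring

theorem ascFactorial_mul_harm_sub_mem {R : Subring ℚ} (a k : ℕ) :
    ((a + 1).ascFactorial k : ℚ) * (harm (a + k) - harm a) ∈ R := by
  induction k with
  | zero => simp [zero_mem]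
  | succ k ih =>
    have h : ((a + 1).ascFactorial (k + 1) : ℚ) * (harm (a + (k + 1)) - harm a) =
        ((a + 1 + k : ℕ) : ℚ) * (((a + 1).ascFactorial k : ℚ) * (harm (a + k) - harm a)) +
          ((a + 1).ascFactorial k : ℚ) := by
      have ha : (a : ℚ) + k + 1 ≠ 0 := by positivity
      rw [← add_assoc, harm_succ, Nat.ascFactorial_succ]
      push_cast
      field_simp
      ring
    rw [h]
    exact add_mem (mul_mem (natCast_mem _ _) ih) (natCast_mem _ _)

theorem coprime_ascFactorial {p : ℕ} [hp : Fact p.Prime] (q r : ℕ) (hr : r < p) :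
    p.Coprime ((p * q + 1).ascFactorial r) := by
  induction r with
  | zero => simp
  | succ r ih =>
    rw [Nat.ascFactorial_succ]
    refine Nat.Coprime.mul_right ?_ (ih (by omega))
    rw [add_assoc, Nat.coprime_mul_left_add_right, add_comm 1 r]
    exact Nat.coprime_of_lt_prime (by omega) hr hp.out

theorem uniformBell_dvd_uniformBell {L N : ℕ} (h : L ≤ N) (m : ℕ) :
    L.uniformBell m ∣ N.uniformBell m := by
  induction N, h using Nat.le_induction with
  | base => rfl
  | succ n _ ih => exact ih.trans (by rw [Nat.uniformBell_succ_left]; exact dvd_mul_left _ _)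

theorem BQ_eq_uniformBell_mul_factorial (N : ℕ) {m : ℕ} (hm : m ≠ 0) :
    BQ N m = (N.uniformBell m : ℚ) * (N.factorial : ℚ) := by
  have h := congrArg (Nat.cast (R := ℚ)) (Nat.uniformBell_mul_eq N hm)
  have hm' : (m.factorial : ℚ) ≠ 0 := by exact_mod_cast m.factorial_ne_zero
  push_cast at h
  rw [BQ, ← h]
  field_simp

theorem Theta_mul_harm_mem {R : Subring ℚ} (L : ℕ) : (Theta L : ℚ) * harm L ∈ R := by
  rw [mul_comm, Theta, Rat.mul_den_eq_num]
  exact intCast_mem _ _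

theorem uniformBell_mul_harm_sub_mem_of_pos {p : ℕ} [hp : Fact p.Prime] (L q r : ℕ)
    (hr : r < p) (hq : 0 < q) :
    (L.uniformBell (p * q + r) : ℚ) * (harm (L * (p * q + r)) - harm (L * (p * q))) ∈
      ratPadicIntegers p := by
  have ha : p * q ≠ 0 := (Nat.mul_pos hp.out.pos hq).ne'
  set a := p * q with haq
  set u := (a + 1).ascFactorial r
  set v := (L * a + 1).ascFactorial (L * r) with hv
  have hu : p.Coprime u := coprime_ascFactorial q r hr
  have hu0 : (u : ℚ) ≠ 0 := by exact_mod_cast (Nat.ascFactorial_pos _ _).ne'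
  have h1 := Nat.uniformBell_mul_eq L (n := a + r) (by omega)
  have h2 := Nat.uniformBell_mul_eq L ha
  rw [mul_add L, ← Nat.factorial_mul_ascFactorial a r,
    ← Nat.factorial_mul_ascFactorial (L * a), ← h2, ← hv] at h1
  have h3 := congrArg (Nat.cast (R := ℚ)) h1
  have ha' : (a.factorial : ℚ) ≠ 0 := by exact_mod_cast a.factorial_ne_zero
  have hL' : (L.factorial : ℚ) ≠ 0 := by exact_mod_cast L.factorial_ne_zero
  have key : (L.uniformBell (a + r) : ℚ) = L.uniformBell a * (u : ℚ)⁻¹ ^ L * v := by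
    push_cast at h3
    rw [inv_pow]
    rw [mul_pow] at h3
    field_simp
    apply mul_right_cancel₀ (mul_ne_zero (pow_ne_zero L ha') hL')
    linear_combination h3
  rw [key, mul_assoc, mul_add L]
  exact mul_mem (mul_mem (natCast_mem _ _) (pow_mem (inv_natCast_mem_ratPadicIntegers hu) _))
    (ascFactorial_mul_harm_sub_mem _ _)

theorem Theta_mul_uniformBell_mul_harm_mem_of_lt {p : ℕ} [hp : Fact p.Prime] (L m : ℕ)
    (hm : m ≠ 0) (hmp : m < p) :
    (Theta L : ℚ) * ((L.uniformBell m : ℚ) * harm (L * m)) ∈ ratPadicIntegers p := by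
  obtain ⟨k, hk⟩ := Nat.exists_eq_add_of_le (Nat.le_mul_of_pos_right L (Nat.pos_of_ne_zero hm))
  have hu : p.Coprime m.factorial := hp.out.coprime_factorial_of_lt hmp
  have hu0 : (m.factorial : ℚ) ≠ 0 := by exact_mod_cast m.factorial_ne_zero
  have hL' : (L.factorial : ℚ) ≠ 0 := by exact_mod_cast L.factorial_ne_zero
  have h1 := Nat.uniformBell_mul_eq L hm
  rw [hk, ← Nat.factorial_mul_ascFactorial] at h1
  have h3 := congrArg (Nat.cast (R := ℚ)) h1
  have key : (L.uniformBell m : ℚ) =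
      (m.factorial : ℚ)⁻¹ ^ L * (L + 1).ascFactorial k := by
    push_cast at h3
    rw [inv_pow]
    field_simp
    apply mul_right_cancel₀ hL'
    linear_combination h3
  rw [key, hk]
  have e : ∀ t u v x y : ℚ, t * (u * v * x) = u * (t * (v * (x - y)) + v * (t * y)) := by
    intros; ring
  rw [e _ _ _ _ (harm L)]
  exact mul_mem (pow_mem (inv_natCast_mem_ratPadicIntegers hu) _)
    (add_mem (mul_mem (natCast_mem _ _) (ascFactorial_mul_harm_sub_mem _ _))
      (mul_mem (natCast_mem _ _) (Theta_mul_harm_mem L)))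

theorem Theta_mul_uniformBell_mul_harm_sub_mem {p : ℕ} [hp : Fact p.Prime] (L m : ℕ)
    (hm : m ≠ 0) :
    (Theta L : ℚ) * ((L.uniformBell m : ℚ) * (harm (L * m) - harm (L * (p * (m / p))))) ∈
      ratPadicIntegers p := by
  rcases Nat.eq_zero_or_pos (m / p) with hq | hq
  · have hmp : m < p := (Nat.div_eq_zero_iff_lt hp.out.pos).1 hq
    simpa [hq, harm_zero] using Theta_mul_uniformBell_mul_harm_mem_of_lt L m hm hmp
  · have h := uniformBell_mul_harm_sub_mem_of_pos L (m / p) (m % p)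
      (Nat.mod_lt m hp.out.pos) hq
    rw [Nat.div_add_mod] at h
    exact mul_mem (natCast_mem _ _) h


/-- Lemma 5 (Krattenthaler–Rivoal): for a prime `p`, `m, s ≥ 0`, positive integers
`N_1, …, N_k`, `M_𝐍 = ∏_i N_i!` and `1 ≤ L ≤ max(N_1, …, N_k)`, one has
`B_𝐍(m)·(H_{Lmp^s} − H_{L⌊m/p⌋p^{s+1}}) ∈ (M_𝐍/(p^s·Θ_L))·ℤ_p`. -/
theorem BQvec_mul_harm_diff_mem_M_pow_p_theta_zp (p : ℕ) [hp : Fact p.Prime] (m s : ℕ)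
    {k : ℕ} (N : Fin k → ℕ) (hN : ∀ i, 0 < N i)
    (L : ℕ) (hL1 : 1 ≤ L) (hL2 : L ≤ Finset.univ.sup N) :
    ‖((BQvec N m * (harm (L * m * p ^ s) - harm (L * (m / p) * p ^ (s + 1))) : ℚ) : ℚ_[p])‖
      ≤ ‖(((∏ i, ((N i).factorial : ℚ)) / ((p : ℚ) ^ s * (Theta L : ℚ)) : ℚ) : ℚ_[p])‖ := by
  rcases eq_or_ne m 0 with rfl | hm
  · simp only [mul_zero, zero_mul, Nat.zero_div, sub_self, Rat.cast_zero, norm_zero]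
    positivity
  have hk : (Finset.univ : Finset (Fin k)).Nonempty := by
    by_contra h
    rw [Finset.not_nonempty_iff_eq_empty.1 h, Finset.sup_empty, Nat.bot_eq_zero] at hL2
    omega
  obtain ⟨i, hi, hiN⟩ := Finset.exists_mem_eq_sup _ hk N
  obtain ⟨c, hc⟩ := (uniformBell_dvd_uniformBell (hiN ▸ hL2) m).trans
    (Finset.dvd_prod_of_mem (fun j => (N j).uniformBell m) hi)
  have hB : BQvec N m = (∏ i, ((N i).factorial : ℚ)) * (L.uniformBell m * c) := by
    rw [BQvec, Finset.prod_congr rfl fun j _ => BQ_eq_uniformBell_mul_factorial (N j) hm,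
      Finset.prod_mul_distrib, mul_comm]
    congr 1
    exact_mod_cast hc
  have hp0 : (p : ℚ) ≠ 0 := by exact_mod_cast hp.out.ne_zero
  have hT0 : (Theta L : ℚ) ≠ 0 := by exact_mod_cast (harm L).den_ne_zero
  set D := harm (L * m * p ^ s) - harm (L * (m / p) * p ^ (s + 1)) with hD
  have hmem : (L.uniformBell m * c * D * ((p : ℚ) ^ s * Theta L) : ℚ) ∈ ratPadicIntegers p := by
    have h1 := pow_mul_harm_mul_pow_sub_harm_mem (p := p) (L * m) s
    have h2 := pow_mul_harm_mul_pow_sub_harm_mem (p := p) (L * (p * (m / p))) s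
    have h3 := Theta_mul_uniformBell_mul_harm_sub_mem (p := p) L m hm
    rw [show L * (p * (m / p)) * p ^ s = L * (m / p) * p ^ (s + 1) by ring] at h2
    convert mul_mem (natCast_mem (ratPadicIntegers p) c) (add_mem h3
      (mul_mem (mul_mem (natCast_mem _ (Theta L)) (natCast_mem _ (L.uniformBell m)))
        (sub_mem h1 h2))) using 1
    rw [hD]
    ring
  have hfac : BQvec N m * D = (∏ i, ((N i).factorial : ℚ)) / ((p : ℚ) ^ s * (Theta L : ℚ)) *
      (L.uniformBell m * c * D * ((p : ℚ) ^ s * Theta L)) := by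
    rw [hB]
    field_simp
  rw [hfac, Rat.cast_mul, norm_mul]
  exact mul_le_of_le_one_right (norm_nonneg _) (mem_ratPadicIntegers.1 hmem)
end
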